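/- Let S ⊂ V with vol(S) ≤ vol(V∖S) and φ(S) ≤ δ. Then for any ℓ ∈ ℕ and any 0 < θ ≤ 1/10, there exists T ⊆ S with vol(T) ≥ θ vol(S) such that every v ∈ T satisfies ‖W^ℓ(v,·) − π‖₂² > (1/(80 m⁷)) (1 − 4δ)^{2ℓ}. -/

import Mathlib

open Finset Matrix

/-- The lazy random walk matrix of a graph. -/
noncomputable def lazyWalk {V : Type*} [Fintype V] [DecidableEq V] (G : SimpleGraph V)
    [DecidableRel G.Adj] : Matrix V V ℝ :=
  fun u v => if u = v then 1 / 2 else if G.Adj u v then 1 / (2 * (G.degree v : ℝ)) else 0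

/-- The volume of a set of vertices: the sum of their degrees. -/
def gvol {V : Type*} [Fintype V] [DecidableEq V] (G : SimpleGraph V) [DecidableRel G.Adj]
    (S : Finset V) : ℕ :=
  ∑ v ∈ S, G.degree v

/-- The number of edges crossing from `S` to `T` (for disjoint `S`, `T`). -/
def gcut {V : Type*} [Fintype V] [DecidableEq V] (G : SimpleGraph V) [DecidableRel G.Adj]
    (S T : Finset V) : ℕ :=
  ((S ×ˢ T).filter (fun p => G.Adj p.1 p.2)).card

/-!
Conjugating `W` by `D^(1/2)` gives a symmetric matrix `N` with `N ≤ 1`. The indicator of `S`,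
centred to have mean zero for `π`, has degree-weighted square norm at most `vol S` and Dirichlet
energy `cut(S) / 2 ≤ δ vol S / 2`, so its component on the part of the spectrum of `N` below
`τ = 1 - 4δ` has square norm at most `vol S / 8`. Above the cutoff `N` is invertible with inverse at
most `1 / τ`, so the rest of the function can be written as `h W^ℓ` with `h` of mean zero for `π`
and `‖h‖² ≤ τ^(-2ℓ) vol S`.

If `‖W^ℓ(·, v) - π‖² ≤ τ^(2ℓ) / (80 m)`, then by Cauchy–Schwarz the value of `h W^ℓ` at `v` is at
most `1/8`, whereas the centred indicator is at least `1/2` on `S`. Hence such `v ∈ S` contribute at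
least `(3/8)²` times their volume to the discarded square norm, and their total volume is at most
`8/9 vol S`.
-/

section SpectralCutoff

open scoped MatrixOrder

variable {n : Type*} [Fintype n] [DecidableEq n] {N : Matrix n n ℝ}

theorem mul_cfc_mulVec_dotProduct_self_le {f q : ℝ → ℝ} {c : ℝ}
    (hfq : ∀ t ∈ spectrum ℝ N, c * f t ^ 2 ≤ q t) (y : n → ℝ) :
    c * (cfc f N *ᵥ y ⬝ᵥ cfc f N *ᵥ y) ≤ y ⬝ᵥ cfc q N *ᵥ y := by
  have hcont (k : ℝ → ℝ) : ContinuousOn k (spectrum ℝ N) := N.finite_real_spectrum.continuousOn k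
  have hsymm : (cfc f N)ᵀ = cfc f N := (cfc_predicate f N : IsSelfAdjoint (cfc f N))
  have hle : c • (cfc f N * cfc f N) ≤ cfc q N := by
    rw [← cfc_mul f f N (hcont _) (hcont _), ← cfc_const_mul c _ N (hcont _)]
    exact cfc_mono (fun t ht => by simpa only [sq] using hfq t ht) (hcont _) (hcont _)
  calc c * (cfc f N *ᵥ y ⬝ᵥ cfc f N *ᵥ y)
      = y ⬝ᵥ (c • (cfc f N * cfc f N)) *ᵥ y := by
        rw [smul_mulVec, dotProduct_smul, ← mulVec_mulVec, dotProduct_mulVec y, ← mulVec_transpose,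
          hsymm, smul_eq_mul]
    _ ≤ y ⬝ᵥ cfc q N *ᵥ y := by
        simpa [sub_mulVec] using (Matrix.le_iff.mp hle).dotProduct_mulVec_nonneg y

theorem dotProduct_cfc_mulVec_eq_zero (hN : N.IsHermitian) {μ : ℝ} {ψ y : n → ℝ}
    (hψ : N *ᵥ ψ = μ • ψ) (hψy : ψ ⬝ᵥ y = 0) (f : ℝ → ℝ) : ψ ⬝ᵥ cfc f N *ᵥ y = 0 := by
  -- The rank-one matrix `ψ ψᵀ` commutes with `N`, hence with every function of `N`.
  have hcomm : Commute N (vecMulVec ψ ψ) := by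
    have hψ' : ψ ᵥ* N = μ • ψ := by
      rw [← hψ, ← mulVec_transpose, ← conjTranspose_eq_transpose_of_trivial, hN.eq]
    rw [Commute, SemiconjBy, mul_vecMulVec, vecMulVec_mul, hψ, hψ', smul_vecMulVec, vecMulVec_smul]
  have hzero : (ψ ⬝ᵥ cfc f N *ᵥ y) • ψ = 0 := by
    rw [← op_smul_eq_smul, ← vecMulVec_mulVec, mulVec_mulVec, ← (hcomm.cfc_real f).eq,
      ← mulVec_mulVec, vecMulVec_mulVec, hψy, MulOpposite.op_zero, zero_smul, mulVec_zero]
  rcases smul_eq_zero.mp hzero with h | rfl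
  · exact h
  · exact zero_dotProduct _

theorem exists_pow_mulVec_approx (hN : (1 - N).PosSemidef) {τ : ℝ} (hτ : 0 < τ)
    (y : n → ℝ) (ℓ : ℕ) :
    ∃ z : n → ℝ, τ ^ (2 * ℓ) * (z ⬝ᵥ z) ≤ y ⬝ᵥ y ∧
      (1 - τ) * ((y - N ^ ℓ *ᵥ z) ⬝ᵥ (y - N ^ ℓ *ᵥ z)) ≤ y ⬝ᵥ (1 - N) *ᵥ y ∧
      ∀ (μ : ℝ) (ψ : n → ℝ), N *ᵥ ψ = μ • ψ → ψ ⬝ᵥ y = 0 → ψ ⬝ᵥ z = 0 := by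
  have hherm : N.IsHermitian := by simpa using isHermitian_one.sub hN.isHermitian
  have hcont (k : ℝ → ℝ) : ContinuousOn k (spectrum ℝ N) := N.finite_real_spectrum.continuousOn k
  -- Invert `t ^ ℓ` above the cutoff `τ` and discard the spectrum below it.
  let g : ℝ → ℝ := fun t => if τ ≤ t then (t ^ ℓ)⁻¹ else 0
  have hpow : 1 - N ^ ℓ * cfc g N = cfc (fun t => 1 - t ^ ℓ * g t) N := by
    rw [cfc_sub _ _ N (hcont _) (hcont _), cfc_mul _ _ N (hcont _) (hcont _), cfc_pow_id N ℓ,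
      cfc_const_one ℝ N]
  have hsub : 1 - N = cfc (fun t : ℝ => 1 - t) N := by
    rw [cfc_sub _ _ N (hcont _) (hcont _), cfc_id' ℝ N, cfc_const_one ℝ N]
  refine ⟨cfc g N *ᵥ y, ?_, ?_, fun μ ψ hψ hψy => dotProduct_cfc_mulVec_eq_zero hherm hψ hψy g⟩
  · have hg : ∀ t ∈ spectrum ℝ N, τ ^ (2 * ℓ) * g t ^ 2 ≤ 1 := by
      intro t _
      by_cases ht : τ ≤ t
      · have htpos : 0 < t := hτ.trans_le ht
        rw [show g t = (t ^ ℓ)⁻¹ from if_pos ht, inv_pow, ← pow_mul', ← div_eq_mul_inv,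
          div_le_one (by positivity)]
        gcongr
      · simp [g, ht]
    simpa [cfc_const_one ℝ N] using mul_cfc_mulVec_dotProduct_self_le hg y
  · have hg : ∀ t ∈ spectrum ℝ N, (1 - τ) * (1 - t ^ ℓ * g t) ^ 2 ≤ 1 - t := by
      intro t htN
      by_cases ht : τ ≤ t
      · have ht1 : t ≤ 1 := (CFC.le_one_iff N).mp (Matrix.le_iff.mpr hN) t htN
        have htpos : 0 < t := hτ.trans_le ht
        simp [g, ht, htpos.ne', ht1]
      · simp only [g, ht, if_false]
        linarith
    have h := mul_cfc_mulVec_dotProduct_self_le hg y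
    rwa [← hpow, ← hsub, sub_mulVec, one_mulVec, ← mulVec_mulVec] at h

end SpectralCutoff

section LazyWalk

variable {V : Type*} [Fintype V] (G : SimpleGraph V) [DecidableRel G.Adj]

/-- The square root of the degree. Multiplication by it carries the degree-weighted inner product of
functions on the vertices to the standard one. -/
noncomputable def sqrtDegree (v : V) : ℝ := √(G.degree v)

theorem sqrtDegree_mul_self (v : V) : sqrtDegree G v * sqrtDegree G v = G.degree v :=
  Real.mul_self_sqrt (Nat.cast_nonneg _)

theorem sqrtDegree_mul_dotProduct_sqrtDegree_mul (f g : V → ℝ) :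
    (sqrtDegree G * f) ⬝ᵥ (sqrtDegree G * g) = ∑ v, G.degree v * (f v * g v) :=
  sum_congr rfl fun v _ => by
    rw [Pi.mul_apply, Pi.mul_apply, mul_mul_mul_comm, sqrtDegree_mul_self]

variable {G} in
theorem sqrtDegree_pos {v : V} (hv : 0 < G.degree v) : 0 < sqrtDegree G v :=
  Real.sqrt_pos.mpr (Nat.cast_pos.mpr hv)

variable {G} in
theorem sqrtDegree_pos_of_adj {u v : V} (h : G.Adj u v) : 0 < sqrtDegree G u :=
  sqrtDegree_pos <| (G.degree_pos_iff_exists_adj u).mpr ⟨v, h⟩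

variable [DecidableEq V]

/-- The symmetric lazy walk `(1 + D^(-1/2) A D^(-1/2)) / 2`, which is conjugate to `lazyWalk G` by
`D^(1/2)` and brings the spectral theorem to bear on it. At an isolated vertex the entry of
`D^(-1/2)` is `0⁻¹ = 0`, so that such a vertex carries the eigenvalue `1 / 2`. -/
noncomputable def symmLazyWalk : Matrix V V ℝ :=
  (1 / 2 : ℝ) • (1 + diagonal (sqrtDegree G)⁻¹ * G.adjMatrix ℝ * diagonal (sqrtDegree G)⁻¹)

theorem symmLazyWalk_apply (u v : V) :
    symmLazyWalk G u v = ((if u = v then 1 else 0) +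
      (if G.Adj u v then (sqrtDegree G u)⁻¹ * (sqrtDegree G v)⁻¹ else 0)) / 2 := by
  simp only [symmLazyWalk, Matrix.smul_apply, Matrix.add_apply, one_apply, mul_diagonal,
    diagonal_mul, SimpleGraph.adjMatrix_apply, Pi.inv_apply, mul_ite, ite_mul, mul_one, mul_zero,
    zero_mul, smul_eq_mul, one_div_mul_eq_div]

theorem semiconjBy_diagonal_sqrtDegree :
    SemiconjBy (diagonal (sqrtDegree G)) (symmLazyWalk G) (lazyWalk G) := by
  ext u v
  rw [diagonal_mul, mul_diagonal, symmLazyWalk_apply, lazyWalk]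
  rcases eq_or_ne u v with rfl | huv
  · simp only [if_true, SimpleGraph.irrefl, if_false]
    ring
  · by_cases hadj : G.Adj u v
    · have hu := sqrtDegree_pos_of_adj hadj
      have hv := sqrtDegree_pos_of_adj hadj.symm
      simp only [huv, hadj, if_true, if_false, zero_add, ← sqrtDegree_mul_self]
      field_simp
    · simp [huv, hadj]

theorem isHermitian_symmLazyWalk : (symmLazyWalk G).IsHermitian := by
  ext u v
  simp only [conjTranspose_apply, star_trivial, symmLazyWalk_apply, G.adj_comm v u,
    eq_comm (a := v), mul_comm]

theorem one_sub_symmLazyWalk_eq :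
    1 - symmLazyWalk G = (1 / 2 : ℝ) • (diagonal (fun v => 1 - (G.degree v : ℝ) / G.degree v) +
      diagonal (sqrtDegree G)⁻¹ * G.lapMatrix ℝ * diagonal (sqrtDegree G)⁻¹) := by
  have hdeg : diagonal (sqrtDegree G)⁻¹ * G.degMatrix ℝ * diagonal (sqrtDegree G)⁻¹ =
      diagonal fun v => (G.degree v : ℝ) / G.degree v := by
    simp only [SimpleGraph.degMatrix, diagonal_mul_diagonal]
    congr 1
    ext v
    simp only [Pi.inv_apply, div_eq_mul_inv, ← sqrtDegree_mul_self]
    ring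
  have hdiag : diagonal (fun v => 1 - (G.degree v : ℝ) / G.degree v) =
      1 - diagonal fun v => (G.degree v : ℝ) / G.degree v := by
    rw [← diagonal_one, diagonal_sub]
  rw [symmLazyWalk, SimpleGraph.lapMatrix, mul_sub, sub_mul, hdeg, hdiag]
  module

theorem posSemidef_one_sub_symmLazyWalk : (1 - symmLazyWalk G).PosSemidef := by
  rw [one_sub_symmLazyWalk_eq]
  refine PosSemidef.smul (.add (.diagonal fun v => ?_) ?_) (by norm_num)
  · exact sub_nonneg.mpr (div_self_le_one _)
  · simpa using (G.posSemidef_lapMatrix ℝ).conjTranspose_mul_mul_same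
      (diagonal (sqrtDegree G)⁻¹)

theorem diagonal_sqrtDegree_mul_one_sub_symmLazyWalk_mul :
    diagonal (sqrtDegree G) * (1 - symmLazyWalk G) * diagonal (sqrtDegree G) =
      (1 / 2 : ℝ) • G.lapMatrix ℝ := by
  ext u v
  simp only [mul_diagonal, diagonal_mul, Matrix.sub_apply, Matrix.smul_apply, one_apply,
    symmLazyWalk_apply, SimpleGraph.lapMatrix, SimpleGraph.degMatrix, diagonal_apply,
    SimpleGraph.adjMatrix_apply, smul_eq_mul]
  rcases eq_or_ne u v with rfl | huv
  · simp only [if_true, SimpleGraph.irrefl, if_false, ← sqrtDegree_mul_self]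
    ring
  · by_cases hadj : G.Adj u v
    · have hu := sqrtDegree_pos_of_adj hadj
      have hv := sqrtDegree_pos_of_adj hadj.symm
      simp only [huv, hadj, if_true, if_false]
      field_simp
      norm_num
    · simp only [huv, hadj, if_false, add_zero, zero_div, sub_zero, mul_zero, zero_mul]

theorem dotProduct_one_sub_symmLazyWalk_mulVec (x : V → ℝ) :
    (sqrtDegree G * x) ⬝ᵥ (1 - symmLazyWalk G) *ᵥ (sqrtDegree G * x) =
      (x ⬝ᵥ G.lapMatrix ℝ *ᵥ x) / 2 := by
  have hdiag : sqrtDegree G * x = diagonal (sqrtDegree G) *ᵥ x := by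
    ext v
    simp only [mulVec_diagonal, Pi.mul_apply]
  calc (sqrtDegree G * x) ⬝ᵥ (1 - symmLazyWalk G) *ᵥ (sqrtDegree G * x)
      = x ⬝ᵥ (diagonal (sqrtDegree G) * (1 - symmLazyWalk G) * diagonal (sqrtDegree G)) *ᵥ x := by
        rw [hdiag, ← mulVec_mulVec, ← mulVec_mulVec, dotProduct_mulVec x, ← mulVec_transpose,
          diagonal_transpose]
    _ = (x ⬝ᵥ G.lapMatrix ℝ *ᵥ x) / 2 := by
        rw [diagonal_sqrtDegree_mul_one_sub_symmLazyWalk_mul, smul_mulVec, dotProduct_smul,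
          smul_eq_mul, one_div_mul_eq_div]

theorem symmLazyWalk_mulVec_sqrtDegree : symmLazyWalk G *ᵥ sqrtDegree G = sqrtDegree G := by
  have henergy : sqrtDegree G ⬝ᵥ (1 - symmLazyWalk G) *ᵥ sqrtDegree G = 0 := by
    have hconst : G.lapMatrix ℝ *ᵥ 1 = 0 := G.lapMatrix_mulVec_const_eq_zero
    simpa only [mul_one, hconst, dotProduct_zero, zero_div]
      using dotProduct_one_sub_symmLazyWalk_mulVec G 1
  have hzero := ((posSemidef_one_sub_symmLazyWalk G).dotProduct_mulVec_zero_iff _).mp henergy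
  rw [sub_mulVec, one_mulVec, sub_eq_zero] at hzero
  exact hzero.symm

variable {G} in
theorem symmLazyWalk_mulVec_single {u : V} (hu : G.degree u = 0) :
    symmLazyWalk G *ᵥ Pi.single u 1 = (1 / 2 : ℝ) • Pi.single u 1 := by
  have hadj (v : V) : ¬ G.Adj v u := fun h =>
    ((G.degree_pos_iff_exists_adj u).mpr ⟨v, h.symm⟩).ne' hu
  ext v
  simp [symmLazyWalk_apply, hadj, Pi.single_apply, div_eq_inv_mul]

theorem symmLazyWalk_pow_mulVec_sqrtDegree_mul (ℓ : ℕ) (h : V → ℝ) :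
    symmLazyWalk G ^ ℓ *ᵥ (sqrtDegree G * h) = sqrtDegree G * (h ᵥ* lazyWalk G ^ ℓ) := by
  have hdiag (f : V → ℝ) : sqrtDegree G * f = f ᵥ* diagonal (sqrtDegree G) := by
    ext v
    rw [vecMul_diagonal, Pi.mul_apply, mul_comm]
  have hsymm : (symmLazyWalk G ^ ℓ)ᵀ = symmLazyWalk G ^ ℓ :=
    ((isHermitian_symmLazyWalk G).pow ℓ).eq
  rw [hdiag, hdiag, vecMul_vecMul, ← ((semiconjBy_diagonal_sqrtDegree G).pow_right ℓ).eq,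
    ← vecMul_vecMul, ← vecMul_transpose, hsymm]

variable {G} in
theorem exists_vecMul_lazyWalk_pow_approx {x : V → ℝ} (hx : ∑ v, G.degree v * x v = 0) {τ : ℝ}
    (hτ : 0 < τ) (ℓ : ℕ) :
    ∃ h : V → ℝ, ∑ v, G.degree v * h v = 0 ∧
      τ ^ (2 * ℓ) * ∑ v, h v ^ 2 ≤ ∑ v, G.degree v * x v ^ 2 ∧
      (1 - τ) * ∑ v, G.degree v * (x v - (h ᵥ* lazyWalk G ^ ℓ) v) ^ 2 ≤
        (x ⬝ᵥ G.lapMatrix ℝ *ᵥ x) / 2 := by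
  obtain ⟨z, hz, happrox, horth⟩ :=
    exists_pow_mulVec_approx (posSemidef_one_sub_symmLazyWalk G) hτ (sqrtDegree G * x) ℓ
  have hdot (f : V → ℝ) : sqrtDegree G ⬝ᵥ (sqrtDegree G * f) = ∑ v, G.degree v * f v := by
    simpa using sqrtDegree_mul_dotProduct_sqrtDegree_mul G 1 f
  have hisolated (v : V) (hv : G.degree v = 0) : z v = 0 := by
    have hs : sqrtDegree G v = 0 := by simp [sqrtDegree, hv]
    simpa [hs] using horth _ _ (symmLazyWalk_mulVec_single hv)
  obtain ⟨h, rfl, h_isolated⟩ :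
      ∃ h, z = sqrtDegree G * h ∧ ∀ v, G.degree v = 0 → h v = 0 := by
    refine ⟨z / sqrtDegree G, funext fun v => ?_, fun v hv => by simp [hisolated v hv]⟩
    rcases (G.degree v).eq_zero_or_pos with hv | hv
    · simp [hisolated v hv]
    · simp [mul_div_cancel₀, (sqrtDegree_pos hv).ne']
  have hsq : ∑ v, h v ^ 2 ≤ ∑ v, G.degree v * (h v * h v) := by
    refine sum_le_sum fun v _ => ?_
    rcases (G.degree v).eq_zero_or_pos with hv | hv
    · simp [h_isolated v hv]
    · rw [← sq]
      exact le_mul_of_one_le_left (sq_nonneg _) (Nat.one_le_cast.mpr hv)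
  rw [sqrtDegree_mul_dotProduct_sqrtDegree_mul, sqrtDegree_mul_dotProduct_sqrtDegree_mul] at hz
  rw [symmLazyWalk_pow_mulVec_sqrtDegree_mul, ← mul_sub, sqrtDegree_mul_dotProduct_sqrtDegree_mul,
    dotProduct_one_sub_symmLazyWalk_mulVec] at happrox
  refine ⟨h, ?_, ?_, ?_⟩
  · rw [← hdot]
    exact horth 1 _ (by rw [symmLazyWalk_mulVec_sqrtDegree, one_smul]) ((hdot x).trans hx)
  · simp only [sq (x _)]
    exact (mul_le_mul_of_nonneg_left hsq (by positivity)).trans hz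
  · simpa only [sq, Pi.sub_apply] using happrox

end LazyWalk

section SparseCut

variable {V : Type*} [Fintype V]

theorem sq_dotProduct_le_of_dotProduct_eq_zero {h b : V → ℝ} (hb : h ⬝ᵥ b = 0) (a : V → ℝ) :
    (h ⬝ᵥ a) ^ 2 ≤ (∑ u, h u ^ 2) * ∑ u, (a u - b u) ^ 2 := by
  have hsub : h ⬝ᵥ a = ∑ u, h u * (a u - b u) := by
    rw [← sub_zero (h ⬝ᵥ a), ← hb, ← dotProduct_sub]
    rfl
  rw [hsub]
  exact sum_mul_sq_le_sq_mul_sq _ _ _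

variable (G : SimpleGraph V) [DecidableRel G.Adj]

variable {G} in
theorem sq_dotProduct_le_of_sum_sq_sub_le {h a : V → ℝ} (hmean : ∑ v, G.degree v * h v = 0)
    {c s : ℝ} (hc : 0 ≤ c) (hh : s * ∑ v, h v ^ 2 ≤ #G.edgeFinset)
    (ha : ∑ v, (a v - G.degree v / (2 * (#G.edgeFinset : ℝ))) ^ 2 ≤
      c / #G.edgeFinset * s) : (h ⬝ᵥ a) ^ 2 ≤ c := by
  have horth : h ⬝ᵥ (fun v => G.degree v / (2 * (#G.edgeFinset : ℝ))) = 0 := by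
    simp only [dotProduct, mul_comm (h _), div_mul_eq_mul_div, ← sum_div, hmean, zero_div]
  calc (h ⬝ᵥ a) ^ 2
      ≤ (∑ v, h v ^ 2) * ∑ v, (a v - G.degree v / (2 * (#G.edgeFinset : ℝ))) ^ 2 :=
        sq_dotProduct_le_of_dotProduct_eq_zero horth a
    _ ≤ (∑ v, h v ^ 2) * (c / #G.edgeFinset * s) := by gcongr
    _ = c * ((s * ∑ v, h v ^ 2) / #G.edgeFinset) := by ring
    _ ≤ c := mul_le_of_le_one_right hc (div_le_one_of_le₀ hh (Nat.cast_nonneg _))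

variable [DecidableEq V]

theorem gvol_add_gvol_compl (S : Finset V) : gvol G S + gvol G Sᶜ = gvol G univ :=
  sum_add_sum_compl S _

theorem gvol_univ : gvol G univ = 2 * #G.edgeFinset :=
  G.sum_degrees_eq_twice_card_edges

variable {G} in
theorem gvol_le_card_edgeFinset {S : Finset V} (hvol : gvol G S ≤ gvol G Sᶜ) :
    gvol G S ≤ #G.edgeFinset := by
  have h := (gvol_add_gvol_compl G S).trans (gvol_univ G)
  omega

theorem sum_card_neighborFinset_sdiff (S : Finset V) :
    ∑ u ∈ S, #(G.neighborFinset u \ S) = gcut G S Sᶜ := by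
  rw [gcut, card_filter, sum_product]
  refine sum_congr rfl fun u _ => ?_
  rw [← card_filter]
  congr 1
  ext v
  simp [and_comm]

/-- The indicator of `S` minus its average with respect to the stationary distribution: the test
function witnessing the sparse cut. The average is `0` when the graph has no edges. -/
noncomputable def centeredIndicator (S : Finset V) (v : V) : ℝ :=
  (if v ∈ S then 1 else 0) - (gvol G S : ℝ) / gvol G univ

theorem sum_degree_mul_centeredIndicator (S : Finset V) :
    ∑ v, G.degree v * centeredIndicator G S v = 0 := by
  have hcancel : (gvol G univ : ℝ) = 0 → (gvol G S : ℝ) = 0 := by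
    have := gvol_add_gvol_compl G S
    norm_cast
    omega
  calc ∑ v, G.degree v * centeredIndicator G S v
      = gvol G S - gvol G univ * ((gvol G S : ℝ) / gvol G univ) := by
        simp [centeredIndicator, mul_sub, ← sum_mul, gvol]
    _ = 0 := by rw [mul_div_cancel_of_imp' hcancel, sub_self]

theorem sum_degree_mul_centeredIndicator_sq_le (S : Finset V) :
    ∑ v, G.degree v * centeredIndicator G S v ^ 2 ≤ gvol G S := by
  set p : ℝ := (gvol G S : ℝ) / gvol G univ with hp
  have hsq (v : V) : G.degree v * centeredIndicator G S v ^ 2 =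
      (if v ∈ S then (G.degree v : ℝ) * (1 - p) else 0) -
        p * (G.degree v * centeredIndicator G S v) := by
    rw [centeredIndicator, ← hp]
    split_ifs <;> ring
  have hp0 : 0 ≤ p := by positivity
  calc ∑ v, G.degree v * centeredIndicator G S v ^ 2
      = gvol G S * (1 - p) := by
        simp only [hsq, sum_sub_distrib, ← mul_sum, sum_degree_mul_centeredIndicator, sum_ite_mem,
          univ_inter, ← sum_mul, mul_zero, sub_zero, gvol, Nat.cast_sum]
    _ ≤ gvol G S := mul_le_of_le_one_right (Nat.cast_nonneg _) (by linarith)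

theorem indicator_dotProduct_lapMatrix_mulVec (S : Finset V) :
    (fun v => if v ∈ S then (1 : ℝ) else 0) ⬝ᵥ
      G.lapMatrix ℝ *ᵥ (fun v => if v ∈ S then (1 : ℝ) else 0) = gcut G S Sᶜ := by
  have hdegree (u : V) : (G.degree u : ℝ) =
      #(G.neighborFinset u ∩ S) + #(G.neighborFinset u \ S) := by
    rw [← G.card_neighborFinset_eq_degree, ← card_inter_add_card_sdiff _ S, Nat.cast_add]
  rw [← sum_card_neighborFinset_sdiff, Nat.cast_sum, dotProduct]
  simp only [ite_mul, one_mul, zero_mul, sum_ite_mem, univ_inter]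
  refine sum_congr rfl fun u hu => ?_
  rw [SimpleGraph.lapMatrix_mulVec_apply, if_pos hu, sum_boole, hdegree, filter_mem_eq_inter]
  ring

theorem centeredIndicator_dotProduct_lapMatrix_mulVec (S : Finset V) :
    centeredIndicator G S ⬝ᵥ G.lapMatrix ℝ *ᵥ centeredIndicator G S = gcut G S Sᶜ := by
  have hconst (c : ℝ) : G.lapMatrix ℝ *ᵥ Function.const V c = 0 := by
    have hsmul : Function.const V c = c • fun _ => 1 := funext fun _ => (mul_one c).symm
    rw [hsmul, mulVec_smul, G.lapMatrix_mulVec_const_eq_zero, smul_zero]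
  have hsub : centeredIndicator G S = (fun v => if v ∈ S then 1 else 0) -
      Function.const V ((gvol G S : ℝ) / gvol G univ) := rfl
  rw [hsub, mulVec_sub, hconst, sub_zero, sub_dotProduct, dotProduct_mulVec (Function.const V _),
    ← mulVec_transpose, (G.isSymm_lapMatrix (R := ℝ)).eq, hconst, zero_dotProduct, sub_zero,
    indicator_dotProduct_lapMatrix_mulVec]

variable {G} in
theorem half_le_centeredIndicator {S : Finset V} (hvol : gvol G S ≤ gvol G Sᶜ) {v : V}
    (hv : v ∈ S) : 1 / 2 ≤ centeredIndicator G S v := by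
  have htwice : 2 * (gvol G S : ℝ) ≤ gvol G univ := by
    have h := gvol_add_gvol_compl G S
    exact_mod_cast (by omega : 2 * gvol G S ≤ gvol G univ)
  have hratio : (gvol G S : ℝ) / gvol G univ ≤ 1 / 2 :=
    div_le_of_le_mul₀ (by positivity) (by norm_num) (by linarith)
  rw [centeredIndicator, if_pos hv]
  linarith

variable {G} in
theorem gvol_le_of_sum_sq_le {S B : Finset V} (hBS : B ⊆ S) (hvol : gvol G S ≤ gvol G Sᶜ)
    {δ : ℝ} (hδ0 : 0 < δ) (hδ : δ < 1 / 4) (hφ : (gcut G S Sᶜ : ℝ) ≤ δ * gvol G S) {ℓ : ℕ}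
    (hB : ∀ v ∈ B, ∑ u, ((lazyWalk G ^ ℓ) u v - G.degree u / (2 * (#G.edgeFinset : ℝ))) ^ 2 ≤
      1 / (80 * (#G.edgeFinset : ℝ)) * (1 - 4 * δ) ^ (2 * ℓ)) :
    (gvol G B : ℝ) ≤ 8 / 9 * gvol G S := by
  obtain ⟨h, hmean, hnorm, happrox⟩ := exists_vecMul_lazyWalk_pow_approx
    (sum_degree_mul_centeredIndicator G S) (τ := 1 - 4 * δ) (by linarith) ℓ
  have hh : (1 - 4 * δ) ^ (2 * ℓ) * ∑ v, h v ^ 2 ≤ #G.edgeFinset :=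
    hnorm.trans <| (sum_degree_mul_centeredIndicator_sq_le G S).trans <|
      mod_cast gvol_le_card_edgeFinset hvol
  have hsmall : ∀ v ∈ B, (h ᵥ* lazyWalk G ^ ℓ) v ≤ 1 / 8 := by
    intro v hv
    have hcol : (h ᵥ* lazyWalk G ^ ℓ) v ^ 2 ≤ 1 / 80 :=
      sq_dotProduct_le_of_sum_sq_sub_le hmean (by norm_num) hh ((hB v hv).trans_eq (by ring))
    exact (abs_le_of_sq_le_sq' (hcol.trans (by norm_num)) (by norm_num)).2
  have hfar : ∀ v ∈ B, 9 / 64 ≤ (centeredIndicator G S v - (h ᵥ* lazyWalk G ^ ℓ) v) ^ 2 := by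
    intro v hv
    have := half_le_centeredIndicator hvol (hBS hv)
    nlinarith [hsmall v hv]
  have hsum : gvol G B * (9 / 64 : ℝ) ≤
      ∑ v, G.degree v * (centeredIndicator G S v - (h ᵥ* lazyWalk G ^ ℓ) v) ^ 2 := by
    rw [gvol, Nat.cast_sum, sum_mul]
    calc ∑ v ∈ B, (G.degree v : ℝ) * (9 / 64)
        ≤ ∑ v ∈ B, G.degree v * (centeredIndicator G S v - (h ᵥ* lazyWalk G ^ ℓ) v) ^ 2 :=
          sum_le_sum fun v hv => by gcongr; exact hfar v hv
      _ ≤ _ := sum_le_univ_sum_of_nonneg fun v => by positivity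
  rw [centeredIndicator_dotProduct_lapMatrix_mulVec, sub_sub_cancel] at happrox
  have hδle : δ * (4 * (gvol G B * (9 / 64 : ℝ))) ≤ δ * (gvol G S / 2) := by
    calc δ * (4 * (gvol G B * (9 / 64 : ℝ))) = 4 * δ * (gvol G B * (9 / 64)) := by ring
      _ ≤ _ := mul_le_mul_of_nonneg_left hsum (by positivity)
      _ ≤ (gcut G S Sᶜ : ℝ) / 2 := happrox
      _ ≤ δ * (gvol G S / 2) := by linarith
  linarith [le_of_mul_le_mul_left hδle hδ0]

end SparseCut

theorem stmt9_general {V : Type*} [Fintype V] [DecidableEq V] (G : SimpleGraph V)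
    [DecidableRel G.Adj] {δ : ℝ} (hδ0 : 0 < δ) (hδ : δ < 1 / 4) {S : Finset V}
    (hvol : gvol G S ≤ gvol G Sᶜ) (hφ : (gcut G S Sᶜ : ℝ) ≤ δ * (gvol G S : ℝ)) (ℓ : ℕ) :
    ∃ T ⊆ S, 1 / 9 * (gvol G S : ℝ) ≤ (gvol G T : ℝ) ∧
      ∀ v ∈ T, 1 / (80 * (#G.edgeFinset : ℝ)) * (1 - 4 * δ) ^ (2 * ℓ)
        < ∑ u, ((lazyWalk G ^ ℓ) u v - (G.degree u : ℝ) / (2 * (#G.edgeFinset : ℝ))) ^ 2 := by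
  let far (v : V) : Prop := 1 / (80 * (#G.edgeFinset : ℝ)) * (1 - 4 * δ) ^ (2 * ℓ)
    < ∑ u, ((lazyWalk G ^ ℓ) u v - (G.degree u : ℝ) / (2 * (#G.edgeFinset : ℝ))) ^ 2
  classical
  have hnear : (gvol G {v ∈ S | ¬ far v} : ℝ) ≤ 8 / 9 * gvol G S :=
    gvol_le_of_sum_sq_le (filter_subset _ _) hvol hδ0 hδ hφ fun v hv =>
      not_lt.mp (mem_filter.mp hv).2
  have hsplit : (gvol G {v ∈ S | far v} : ℝ) + gvol G {v ∈ S | ¬ far v} = gvol G S :=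
    mod_cast sum_filter_add_sum_filter_not S far _
  exact ⟨{v ∈ S | far v}, filter_subset _ _, by linarith, fun v hv => (mem_filter.mp hv).2⟩

/-- If `S ⊂ V` has `vol S ≤ vol S̄` and `φ(S) ≤ δ`, then for any `ℓ` and any `0 < θ ≤ 1/10`
there exists `T ⊆ S` with `vol T ≥ θ vol S` such that every `v ∈ T` satisfies
`‖W^ℓ(v,·) − π‖₂² > (1/(80 m⁷)) (1 − 4δ)^{2ℓ}`. -/
theorem stmt9 {V : Type*} [Fintype V] [DecidableEq V] (G : SimpleGraph V) [DecidableRel G.Adj]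
    (hconn : G.Connected) (m : ℕ) (hm : m = G.edgeFinset.card) (hm1 : 1 ≤ m)
    (δ : ℝ) (hδ0 : 0 < δ) (hδ : δ < 1 / 4)
    (S : Finset V) (hS : S.Nonempty) (hSproper : S ≠ Finset.univ)
    (hvol : gvol G S ≤ gvol G Sᶜ)
    (hφ : (gcut G S Sᶜ : ℝ) ≤ δ * (gvol G S : ℝ))
    (ℓ : ℕ) (θ : ℝ) (hθ0 : 0 < θ) (hθ : θ ≤ 1 / 10) :
    ∃ T ⊆ S, θ * (gvol G S : ℝ) ≤ (gvol G T : ℝ) ∧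
      ∀ v ∈ T, 1 / (80 * (m : ℝ) ^ 7) * (1 - 4 * δ) ^ (2 * ℓ)
        < ∑ u, ((lazyWalk G ^ ℓ) u v - (G.degree u : ℝ) / (2 * (m : ℝ))) ^ 2 := by
  subst hm
  obtain ⟨T, hTS, hT, hfar⟩ := stmt9_general G hδ0 hδ hvol hφ ℓ
  have hpow : (#G.edgeFinset : ℝ) ≤ (#G.edgeFinset : ℝ) ^ 7 :=
    le_self_pow₀ (mod_cast hm1) (by norm_num)
  have hτ : 0 ≤ 1 - 4 * δ := by linarith
  refine ⟨T, hTS, hT.trans' (by gcongr; linarith), fun v hv => (hfar v hv).trans_le' ?_⟩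
  gcongr
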